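/- Let (A, τ, S, (A_I), (E_I)) be an A_0-valued white noise and let (u_t)_{t≥0} be a unitary cocycle for the shift S. Then E_0(u_{s+t}) = E_0(u_s) E_0(u_t) for all s, t ≥ 0; in particular t ↦ E_0(u_t) is a one-parameter semigroup of elements of A_0 of norm at most 1, acting by left multiplication as a semigroup of contractions. -/

import Mathlib

/-!
By the cocycle identity, `u_{s+t}` is the product of `S_t(u_s) ∈ A_{[t,s+t]}` and
`u_t ∈ A_{[0,t]}`. These intervals have disjoint interiors, so independence makes `E₀`
multiplicative on this product, and the shift invariance of `E₀` removes `S_t`.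
-/

open scoped ComplexOrder

/-- A faithful tracial state on a unital C*-algebra. -/
structure IsTracialState {A : Type*} [CStarAlgebra A] (τ : A →ₗ[ℂ] ℂ) : Prop where
  map_one : τ 1 = 1
  pos : ∀ x : A, 0 ≤ τ (star x * x)
  tracial : ∀ x y : A, τ (x * y) = τ (y * x)
  bounded : ∀ x : A, ‖τ x‖ ≤ ‖x‖
  faithful : ∀ x : A, τ (star x * x) = 0 → x = 0

/-- A (trace-preserving) conditional expectation onto a subset `B` of `A`. -/
structure IsCondExp {A : Type*} [CStarAlgebra A] (τ : A →ₗ[ℂ] ℂ) (B : Set A)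
    (E : A →ₗ[ℂ] A) : Prop where
  mem_range : ∀ x, E x ∈ B
  map_of_mem : ∀ b ∈ B, E b = b
  bimodule : ∀ a ∈ B, ∀ c ∈ B, ∀ x, E (a * x * c) = a * E x * c
  map_star : ∀ x, E (star x) = star (E x)
  contractive : ∀ x, ‖E x‖ ≤ ‖x‖
  trace_eq : ∀ x, τ (E x) = τ x

/-- An `A₀`-valued white noise `(A, τ, S, (A_I), (E_I))`.  The filtration is indexed by
closed intervals `[a, b]` of `ℝ` with (possibly infinite) endpoints `a b : EReal`. -/
structure WhiteNoise (A : Type*) [CStarAlgebra A] (τ : A →ₗ[ℂ] ℂ) where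
  tracial : IsTracialState τ
  /-- the filtration algebra `A_{[a,b]}` -/
  alg : EReal → EReal → StarSubalgebra ℂ A
  alg_isClosed : ∀ a b, IsClosed (alg a b : Set A)
  alg_mono : ∀ a b a' b' : EReal, a' ≤ a → b ≤ b' → (alg a b : Set A) ⊆ alg a' b'
  /-- the distinguished subalgebra `A₀` -/
  A0 : StarSubalgebra ℂ A
  A0_isClosed : IsClosed (A0 : Set A)
  A0_le : ∀ a b, (A0 : Set A) ⊆ alg a b
  /-- the conditional expectation `E_{[a,b]}` onto `A_{[a,b]}` -/
  E : EReal → EReal → (A →ₗ[ℂ] A)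
  /-- the conditional expectation `E₀` onto `A₀` -/
  E0 : A →ₗ[ℂ] A
  E_condExp : ∀ a b, IsCondExp τ (alg a b) (E a b)
  E0_condExp : IsCondExp τ A0 E0
  /-- the white noise shift: a one-parameter group of trace-preserving `*`-automorphisms -/
  S : ℝ → (A ≃⋆ₐ[ℂ] A)
  S_zero : ∀ x, S 0 x = x
  S_add : ∀ s t x, S (s + t) x = S s (S t x)
  S_trace : ∀ t x, τ (S t x) = τ x
  S_alg : ∀ (t : ℝ) (a b : EReal),
    (S t) '' (alg a b : Set A) = (alg (a + (t : EReal)) (b + (t : EReal)) : Set A)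
  S_fix : ∀ t, ∀ a ∈ A0, S t a = a
  E0_S : ∀ t x, E0 (S t x) = E0 x
  /-- independence over `A₀`: `E_I ∘ E_J = E₀` whenever the interiors of `I`, `J` are disjoint -/
  indep : ∀ a b c d : EReal,
    (∀ x : ℝ, ¬((a < (x : EReal) ∧ (x : EReal) < b) ∧ (c < (x : EReal) ∧ (x : EReal) < d))) →
    ∀ y, E a b (E c d y) = E0 y
  /-- the tower property `E₀ ∘ E_I = E₀` -/
  tower : ∀ (a b : EReal) (y : A), E0 (E a b y) = E0 y

theorem norm_le_one_of_star_mul_self_eq_one {R : Type*} [NormedRing R] [StarRing R] [CStarRing R]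
    {x : R} (hx : star x * x = 1) : ‖x‖ ≤ 1 := by
  have hsq : ‖x‖ ^ 2 ≤ 1 := by
    rw [sq, ← CStarRing.norm_star_mul_self, hx]
    exact IsStarProjection.norm_le 1 (.one R)
  exact (sq_le_one_iff₀ (norm_nonneg x)).mp hsq

namespace IsCondExp

variable {A : Type*} [CStarAlgebra A] {τ : A →ₗ[ℂ] ℂ} {B : Set A} {E : A →ₗ[ℂ] A}

theorem map_mul_of_mem_left (hE : IsCondExp τ B E) (hB : 1 ∈ B) {b : A} (hb : b ∈ B) (x : A) :
    E (b * x) = b * E x := by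
  simpa only [mul_one] using hE.bimodule b hb 1 hB x

theorem map_mul_of_mem_right (hE : IsCondExp τ B E) (hB : 1 ∈ B) {b : A} (hb : b ∈ B) (x : A) :
    E (x * b) = E x * b := by
  simpa only [one_mul] using hE.bimodule 1 hB b hb x

end IsCondExp

namespace WhiteNoise

variable {A : Type*} [CStarAlgebra A] {τ : A →ₗ[ℂ] ℂ} (W : WhiteNoise A τ)

theorem S_mem_alg (t : ℝ) {a b : EReal} {x : A} (hx : x ∈ W.alg a b) :
    W.S t x ∈ W.alg (a + t) (b + t) := by
  have : W.S t x ∈ W.S t '' (W.alg a b : Set A) := Set.mem_image_of_mem _ hx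
  rwa [W.S_alg] at this

theorem E_eq_E0_of_disjoint_Ioo {a b c d : EReal} (hdisj : Disjoint (Set.Ioo a b) (Set.Ioo c d))
    {x : A} (hx : x ∈ W.alg c d) : W.E a b x = W.E0 x :=
  calc W.E a b x = W.E a b (W.E c d x) := by rw [(W.E_condExp c d).map_of_mem x hx]
    _ = W.E0 x := W.indep a b c d (fun _ hr => Set.disjoint_left.mp hdisj hr.1 hr.2) x

theorem E0_mul_of_disjoint_Ioo {a b c d : EReal} (hdisj : Disjoint (Set.Ioo a b) (Set.Ioo c d))
    {x y : A} (hx : x ∈ W.alg c d) (hy : y ∈ W.alg a b) :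
    W.E0 (x * y) = W.E0 x * W.E0 y :=
  calc W.E0 (x * y) = W.E0 (W.E a b (x * y)) := (W.tower a b _).symm
    _ = W.E0 (W.E a b x * y) := by
      rw [(W.E_condExp a b).map_mul_of_mem_right (one_mem (W.alg a b)) hy]
    _ = W.E0 (W.E0 x * y) := by rw [W.E_eq_E0_of_disjoint_Ioo hdisj hx]
    _ = W.E0 x * W.E0 y :=
      W.E0_condExp.map_mul_of_mem_left (one_mem W.A0) (W.E0_condExp.mem_range x) y

/-- An adapted cocycle for the shift of a white noise: a unitary cocycle without the unitarity.
The family is a function on all of `ℝ`, constrained only at nonnegative times. -/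
structure IsAdaptedCocycle (u : ℝ → A) : Prop where
  mem_alg : ∀ t : ℝ, 0 ≤ t → u t ∈ W.alg 0 t
  map_add : ∀ s t : ℝ, 0 ≤ s → 0 ≤ t → u (s + t) = W.S t (u s) * u t

variable {W}

theorem IsAdaptedCocycle.E0_add {u : ℝ → A} (hu : W.IsAdaptedCocycle u) {s t : ℝ}
    (hs : 0 ≤ s) (ht : 0 ≤ t) : W.E0 (u (s + t)) = W.E0 (u s) * W.E0 (u t) := by
  have hdisj : Disjoint (Set.Ioo (0 : EReal) t) (Set.Ioo (0 + t : EReal) (s + t)) := by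
    simp
  calc W.E0 (u (s + t)) = W.E0 (W.S t (u s) * u t) := by rw [hu.map_add s t hs ht]
    _ = W.E0 (W.S t (u s)) * W.E0 (u t) :=
      W.E0_mul_of_disjoint_Ioo hdisj (W.S_mem_alg t (hu.mem_alg s hs)) (hu.mem_alg t ht)
    _ = W.E0 (u s) * W.E0 (u t) := by rw [W.E0_S]

end WhiteNoise

theorem unitary_cocycle_condExp_semigroup_general {A : Type*} [CStarAlgebra A]
    {τ : A →ₗ[ℂ] ℂ} {W : WhiteNoise A τ} {u : ℝ → A} (hu : W.IsAdaptedCocycle u)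
    (hnorm : ∀ t : ℝ, 0 ≤ t → ‖u t‖ ≤ 1) :
    (∀ s t : ℝ, 0 ≤ s → 0 ≤ t → W.E0 (u (s + t)) = W.E0 (u s) * W.E0 (u t)) ∧
    (∀ t : ℝ, 0 ≤ t → W.E0 (u t) ∈ W.A0 ∧ ‖W.E0 (u t)‖ ≤ 1 ∧
      ∀ y : A, ‖W.E0 (u t) * y‖ ≤ ‖y‖) := by
  refine ⟨fun s t hs ht => hu.E0_add hs ht, fun t ht => ?_⟩
  have hE : ‖W.E0 (u t)‖ ≤ 1 := (W.E0_condExp.contractive (u t)).trans (hnorm t ht)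
  exact ⟨W.E0_condExp.mem_range (u t), hE, fun y => by
    simpa only [one_mul] using norm_mul_le_of_le hE (le_refl ‖y‖)⟩

/-- For a unitary cocycle `u` for the shift of a white noise, `t ↦ E₀(u_t)` is a
one-parameter semigroup of elements of `A₀` of norm at most `1`, acting by left
multiplication as a semigroup of contractions. -/
theorem unitary_cocycle_condExp_semigroup {A : Type*} [CStarAlgebra A]
    (τ : A →ₗ[ℂ] ℂ) (W : WhiteNoise A τ) (u : ℝ → A)
    (hunit : ∀ t : ℝ, 0 ≤ t → star (u t) * u t = 1 ∧ u t * star (u t) = 1)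
    (hadapt : ∀ t : ℝ, 0 ≤ t → u t ∈ W.alg 0 (t : EReal))
    (hcoc : ∀ s t : ℝ, 0 ≤ s → 0 ≤ t → u (s + t) = W.S t (u s) * u t) :
    (∀ s t : ℝ, 0 ≤ s → 0 ≤ t → W.E0 (u (s + t)) = W.E0 (u s) * W.E0 (u t)) ∧
    (∀ t : ℝ, 0 ≤ t → W.E0 (u t) ∈ W.A0 ∧ ‖W.E0 (u t)‖ ≤ 1 ∧
      ∀ y : A, ‖W.E0 (u t) * y‖ ≤ ‖y‖) :=
  unitary_cocycle_condExp_semigroup_general ⟨hadapt, hcoc⟩ fun t ht =>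
    norm_le_one_of_star_mul_self_eq_one (hunit t ht).1
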